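/- arXiv:1410.8632 — 2 statements merged into one kernel-verified Lean document; each statement's English description precedes it below -/
import Mathlib

section
/- Let P ⊆ ℝ^d be a polytope, i.e., the convex hull of a finite set of points. For each extreme point v of P, let T_v = {v + w : w ∈ ℝ^d and there exists ε > 0 with v + ε·w ∈ P} be the supporting cone of P at v. Then the function 𝟙_P − Σ_{v ∈ ext(P)} 𝟙_{T_v}, where the (finite) sum runs over the extreme points of P, belongs to the ℝ-linear span of the set of indicator functions 𝟙_{s + C}, where s ranges over ℝ^d and C ranges over polyhedral cones in ℝ^d containing a line. -/
/-!
Suppose first that all the inequalities defining a polyhedron `P` are tight at one point `s`. Then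
`P` is its own supporting cone at `s`, and its supporting cone at any other point `v` contains the
line through `s` and `v`. If the inequalities have no common tight point, a Fredholm certificate
for the inconsistent linear system shows that some of the halfspaces, together with the complements
of the others, have empty intersection; inclusion–exclusion then reduces `P` to proper subsystems.
So the indicator of every polyhedron is an integer combination of indicators of cones.

Passing to the tangent function at a point is additive. Hence, modulo cones with lines, the identity
saying that `f` is the sum over all points `v` of its tangent functions at `v` extends from cones
to all polyhedra. At a point of `P` that is not extreme the supporting cone contains a line, so only
the extreme points remain. That polytopes are polyhedra is Fourier–Motzkin elimination.
-/

namespace Brion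

open Filter Finset

variable {𝕜 E ι : Type*} [Field 𝕜] [AddCommGroup E] [Module 𝕜 E]

theorem prod_mem_of_prod_sdiff_mul_prod_one_sub_eq_zero {A : Type*} [CommRing A] [DecidableEq ι]
    (M : AddSubgroup A) {I K : Finset ι} (hKI : K ⊆ I) {f : ι → A}
    (h_zero : (∏ i ∈ I \ K, f i) * ∏ i ∈ K, (1 - f i) = 0)
    (h_mem : ∀ J ⊂ I, ∏ i ∈ J, f i ∈ M) : ∏ i ∈ I, f i ∈ M := by
  have sign_mul_mem {x : A} (n : ℕ) (hx : x ∈ M) : (-1) ^ n * x ∈ M := by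
    rcases neg_one_pow_eq_or A n with h | h <;> simpa [h] using hx
  have expansion : ∑ t ∈ K.powerset, (-1) ^ #t * ∏ i ∈ (I \ K) ∪ t, f i = 0 := by
    rw [← h_zero, prod_sub, mul_sum]
    refine sum_congr rfl fun t ht => ?_
    rw [prod_union (disjoint_sdiff_self_left.mono_right (mem_powerset.mp ht))]
    simp only [prod_const_one]
    ring
  rw [← insert_erase (mem_powerset_self K), sum_insert (notMem_erase _ _),
    sdiff_union_of_subset hKI, add_eq_zero_iff_eq_neg] at expansion
  have signed_mem : (-1) ^ #K * ∏ i ∈ I, f i ∈ M := by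
    rw [expansion]
    refine M.neg_mem (M.sum_mem fun t ht => sign_mul_mem _ (h_mem _ ?_))
    have ht : t ⊂ K := mem_ssubsets.mp ht
    obtain ⟨i, hiK, hit⟩ := exists_of_ssubset ht
    refine ⟨union_subset sdiff_subset (ht.subset.trans hKI), fun h => ?_⟩
    simpa [hiK, hit] using h (hKI hiK)
  simpa [← mul_assoc, ← mul_pow] using sign_mul_mem #K signed_mem

theorem exists_sum_mul_sub_eq_one {I : Finset ι} {ν : ι → Module.Dual 𝕜 E} {a : ι → 𝕜}
    (h : ¬∃ s, ∀ i ∈ I, ν i s = a i) :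
    ∃ c : ι → 𝕜, ∀ x, ∑ i ∈ I, c i * (a i - ν i x) = 1 := by
  classical
  have notMem : (fun i : I => a i) ∉ LinearMap.range (LinearMap.pi fun i : I => ν i) := by
    rintro ⟨s, hs⟩
    exact h ⟨s, fun i hi => congrFun hs ⟨i, hi⟩⟩
  obtain ⟨f, hfa, hf⟩ := Submodule.exists_le_ker_of_notMem notMem
  obtain ⟨c, hc⟩ : ∃ c : I → 𝕜, ∀ y, f y = ∑ i, c i * y i :=
    ⟨fun i => f fun j => if i = j then 1 else 0, fun y => by
      simp only [f.pi_apply_eq_sum_univ y, smul_eq_mul, mul_comm]⟩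
  refine ⟨fun i => if hi : i ∈ I then (f fun i : I => a i)⁻¹ * c ⟨i, hi⟩ else 0, fun x => ?_⟩
  have hfx : f (fun i : I => ν i x) = 0 := hf ⟨x, rfl⟩
  calc
    _ = (f fun i : I => a i)⁻¹ * f ((fun i : I => a i) - fun i : I => ν i x) := by
      rw [← sum_coe_sort, hc (_ - _), mul_sum]
      simp [mul_assoc]
    _ = 1 := by rw [map_sub, hfx, sub_zero, inv_mul_cancel₀ hfa]

theorem apply_lineMap (φ : Module.Dual 𝕜 E) (v y : E) (c : 𝕜) :
    φ (AffineMap.lineMap v y c) = c * (φ y - φ v) + φ v := by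
  simp [AffineMap.lineMap_apply_module']

variable [LinearOrder 𝕜]

/-- The solution set of finitely many weak linear inequalities. Keeping the inequalities as data,
rather than only their solution set, allows passing to subsystems. -/
def polyhedron (I : Finset ι) (ν : ι → Module.Dual 𝕜 E) (a : ι → 𝕜) : Set E :=
  {x | ∀ i ∈ I, ν i x ≤ a i}

variable (𝕜) in
/-- A set cut out by finitely many weak linear inequalities, bounded or not. -/
def IsPolyhedron (P : Set E) : Prop :=
  ∃ H : Finset (Module.Dual 𝕜 E × 𝕜), P = polyhedron H Prod.fst Prod.snd

variable (𝕜) in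
/-- A polyhedral cone with apex `0`, presented by linear inequalities. -/
def IsPolyhedralCone (C : Set E) : Prop :=
  ∃ (n : ℕ) (ν : Fin n → Module.Dual 𝕜 E), C = {x | ∀ i, ν i x ≤ 0}

variable (𝕜) in
/-- The functions spanned by the indicators of translated polyhedral cones that contain a line:
the functions that are negligible in Brion's theorem. -/
def lineConeSpan (R E : Type*) [CommRing R] [AddCommGroup E] [Module 𝕜 E] : Submodule R (E → R) :=
  Submodule.span R {f | ∃ (s : E) (C : Set E), IsPolyhedralCone 𝕜 C ∧
    (∃ w, w ≠ 0 ∧ w ∈ C ∧ -w ∈ C) ∧ f = Set.indicator ((fun y => s + y) '' C) (fun _ => 1)}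

variable (𝕜) in
/-- The supporting cone of `P` at `v`, with apex `v`. -/
def supportingCone (P : Set E) (v : E) : Set E :=
  {y | ∃ w, y = v + w ∧ ∃ ε : 𝕜, 0 < ε ∧ v + ε • w ∈ P}

/-- The indices of the inequalities that are tight at `v`. -/
def activeConstraints (I : Finset ι) (ν : ι → Module.Dual 𝕜 E) (a : ι → 𝕜) (v : E) : Finset ι :=
  {i ∈ I | ν i v = a i}

variable (𝕜) in
/-- The function `g` records the values of `f` infinitesimally close to `v`: its value at `y` is the
constant value of `f` on an initial piece of the open segment from `v` to `y`. The parameter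
of the segment is `t⁻¹` with `t → ∞`, so that no topology on `𝕜` is needed. -/
def IsTangentAt {A : Type*} (f : E → A) (v : E) (g : E → A) : Prop :=
  ∀ y, ∀ᶠ t : 𝕜 in atTop, f (AffineMap.lineMap v y t⁻¹) = g y

section InclusionExclusion

theorem prod_indicator_eq_indicator_polyhedron {R : Type*} [CommSemiring R] (I : Finset ι)
    (ν : ι → Module.Dual 𝕜 E) (a : ι → 𝕜) :
    ∏ i ∈ I, {x | ν i x ≤ a i}.indicator (1 : E → R) = (polyhedron I ν a).indicator 1 := by
  rw [prod_indicator_const, one_pow]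
  congr 1
  ext x
  simp [polyhedron]

variable [IsStrictOrderedRing 𝕜]

theorem exists_subset_forall_exists_le {I : Finset ι} {ν : ι → Module.Dual 𝕜 E} {a : ι → 𝕜}
    (h : ¬∃ s, ∀ i ∈ I, ν i s = a i) :
    ∃ K ⊆ I, ∀ x, (∀ i ∈ I, i ∉ K → ν i x ≤ a i) → ∃ i ∈ K, ν i x ≤ a i := by
  obtain ⟨c, hc⟩ := exists_sum_mul_sub_eq_one h
  refine ⟨{i ∈ I | 0 < c i}, filter_subset _ _, fun x hx => ?_⟩
  by_contra! h_lt
  have sum_nonpos : ∑ i ∈ I, c i * (a i - ν i x) ≤ 0 := by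
    refine sum_nonpos fun i hi => ?_
    by_cases hci : 0 < c i
    · exact mul_nonpos_of_nonneg_of_nonpos hci.le
        (sub_nonpos.mpr (h_lt i (mem_filter.mpr ⟨hi, hci⟩)).le)
    · exact mul_nonpos_of_nonpos_of_nonneg (not_lt.mp hci)
        (sub_nonneg.mpr (hx i hi fun h => hci (mem_filter.mp h).2))
  exact zero_lt_one.not_ge (hc x ▸ sum_nonpos)

/-- If the inequalities cannot all be tight at once, inclusion–exclusion over the set `K` of
`exists_subset_forall_exists_le` writes the polyhedron in terms of proper subsystems. -/
theorem indicator_polyhedron_mem_of_forall_apex {R : Type*} [CommRing R]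
    (M : AddSubgroup (E → R)) (I : Finset ι) (ν : ι → Module.Dual 𝕜 E) (a : ι → 𝕜)
    (h_cone : ∀ J ⊆ I, ∀ s, (∀ i ∈ J, ν i s = a i) → (polyhedron J ν a).indicator 1 ∈ M) :
    (polyhedron I ν a).indicator 1 ∈ M := by
  classical
  induction I using Finset.strongInduction with
  | H I ih =>
    by_cases h : ∃ s, ∀ i ∈ I, ν i s = a i
    · exact h.elim (h_cone I Subset.rfl)
    obtain ⟨K, hKI, hK⟩ := exists_subset_forall_exists_le h
    rw [← prod_indicator_eq_indicator_polyhedron]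
    refine prod_mem_of_prod_sdiff_mul_prod_one_sub_eq_zero M hKI ?_ fun J hJ => ?_
    · ext x
      simp only [Pi.mul_apply, Finset.prod_apply, Pi.sub_apply, Pi.one_apply, Pi.zero_apply]
      by_cases hx : ∀ i ∈ I, i ∉ K → ν i x ≤ a i
      · obtain ⟨i, hi, hle⟩ := hK x hx
        rw [prod_eq_zero hi (by simp [hle]), mul_zero]
      · push Not at hx
        obtain ⟨i, hi, hiK, hlt⟩ := hx
        rw [prod_eq_zero (mem_sdiff.mpr ⟨hi, hiK⟩) (by simp [hlt]), zero_mul]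
    · rw [prod_indicator_eq_indicator_polyhedron]
      exact ih J hJ fun L hL => h_cone L (hL.trans hJ.subset)

end InclusionExclusion

section Tangent

variable {I : Finset ι} {ν : ι → Module.Dual 𝕜 E} {a : ι → 𝕜} {v : E}

theorem activeConstraints_eq_self {s : E} (hs : ∀ i ∈ I, ν i s = a i) :
    activeConstraints I ν a s = I :=
  filter_true_of_mem hs

theorem apply_of_mem_activeConstraints {i : ι} (hi : i ∈ activeConstraints I ν a v) : ν i v = a i :=
  (mem_filter.mp hi).2

namespace IsTangentAt

section Add

variable {A : Type*} [AddGroup A] {f f' g g' : E → A} {v : E}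

theorem add (h : IsTangentAt 𝕜 f v g) (h' : IsTangentAt 𝕜 f' v g') :
    IsTangentAt 𝕜 (f + f') v (g + g') := fun y => by
  filter_upwards [h y, h' y] with t ht ht'
  simp only [Pi.add_apply, ht, ht']

theorem neg (h : IsTangentAt 𝕜 f v g) : IsTangentAt 𝕜 (-f) v (-g) := fun y => by
  filter_upwards [h y] with t ht
  simp only [Pi.neg_apply, ht]

end Add

theorem const {A : Type*} (c : A) (v : E) : IsTangentAt 𝕜 (fun _ => c) v (fun _ => c) :=
  fun _ => Eventually.of_forall fun _ => rfl

theorem unique {A : Type*} {f g g' : E → A} {v : E} (h : IsTangentAt 𝕜 f v g)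
    (h' : IsTangentAt 𝕜 f v g') : g = g' :=
  funext fun y => let ⟨_, ht, ht'⟩ := ((h y).and (h' y)).exists; ht.symm.trans ht'

end IsTangentAt

variable [IsStrictOrderedRing 𝕜]

theorem eventually_apply_lineMap_inv_lt {φ : Module.Dual 𝕜 E} {c : 𝕜} (h : φ v < c) (y : E) :
    ∀ᶠ t : 𝕜 in atTop, φ (AffineMap.lineMap v y t⁻¹) < c := by
  filter_upwards [eventually_gt_atTop 0, eventually_gt_atTop ((φ y - φ v) / (c - φ v))]
    with t ht hlt
  rw [apply_lineMap, ← lt_sub_iff_add_lt, inv_mul_lt_iff₀ ht]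
  exact (div_lt_iff₀ (sub_pos.mpr h)).mp hlt

theorem eventually_lineMap_inv_mem_polyhedron (hv : v ∈ polyhedron I ν a) {y : E}
    (hy : y ∈ polyhedron (activeConstraints I ν a v) ν a) :
    ∀ᶠ t : 𝕜 in atTop, AffineMap.lineMap v y t⁻¹ ∈ polyhedron I ν a := by
  simp only [polyhedron, Set.mem_ofPred_eq, eventually_all_finset]
  intro i hi
  rcases (hv i hi).lt_or_eq with hlt | heq
  · exact (eventually_apply_lineMap_inv_lt hlt y).mono fun t => le_of_lt
  · filter_upwards [eventually_ge_atTop 0] with t ht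
    have hyi : ν i y ≤ a i := hy i (mem_filter.mpr ⟨hi, heq⟩)
    rw [apply_lineMap, heq]
    simpa using mul_nonpos_of_nonneg_of_nonpos (inv_nonneg.mpr ht) (sub_nonpos.mpr hyi)

theorem supportingCone_polyhedron (hv : v ∈ polyhedron I ν a) :
    supportingCone 𝕜 (polyhedron I ν a) v = polyhedron (activeConstraints I ν a v) ν a := by
  ext y
  constructor
  · rintro ⟨w, rfl, ε, hε, hw⟩ i hi
    obtain ⟨hiI, hiv⟩ := mem_filter.mp hi
    have hwi : ν i (v + ε • w) ≤ a i := hw i hiI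
    rw [map_add, map_smul, smul_eq_mul, hiv, add_le_iff_nonpos_right] at hwi
    rw [map_add, hiv, add_le_iff_nonpos_right]
    exact nonpos_of_mul_nonpos_right hwi hε
  · intro hy
    obtain ⟨t, ht_mem, ht_pos⟩ :=
      ((eventually_lineMap_inv_mem_polyhedron hv hy).and (eventually_gt_atTop 0)).exists
    refine ⟨y - v, (add_sub_cancel v y).symm, t⁻¹, inv_pos.mpr ht_pos, ?_⟩
    rwa [AffineMap.lineMap_apply_module', add_comm] at ht_mem

theorem isTangentAt_indicator_polyhedron_of_mem {R : Type*} [Zero R] [One R]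
    (hv : v ∈ polyhedron I ν a) :
    IsTangentAt 𝕜 ((polyhedron I ν a).indicator (1 : E → R)) v
      ((supportingCone 𝕜 (polyhedron I ν a) v).indicator 1) := by
  intro y
  by_cases hy : y ∈ supportingCone 𝕜 (polyhedron I ν a) v
  · filter_upwards [eventually_lineMap_inv_mem_polyhedron hv (supportingCone_polyhedron hv ▸ hy)]
      with t ht
    simp [ht, hy]
  · filter_upwards [eventually_gt_atTop 0] with t ht
    have h_notMem : AffineMap.lineMap v y t⁻¹ ∉ polyhedron I ν a := fun h =>
      hy ⟨y - v, (add_sub_cancel v y).symm, t⁻¹, inv_pos.mpr ht, by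
        rwa [AffineMap.lineMap_apply_module', add_comm] at h⟩
    simp [h_notMem, hy]

theorem isTangentAt_indicator_polyhedron_of_notMem {R : Type*} [Zero R] [One R]
    (hv : v ∉ polyhedron I ν a) :
    IsTangentAt 𝕜 ((polyhedron I ν a).indicator (1 : E → R)) v 0 := by
  intro y
  simp only [polyhedron, Set.mem_ofPred_eq, not_forall, not_le] at hv
  obtain ⟨i, hi, hiv⟩ := hv
  have h_neg : (-ν i) v < -a i := neg_lt_neg hiv
  filter_upwards [eventually_apply_lineMap_inv_lt h_neg y] with t ht
  have h_notMem : AffineMap.lineMap v y t⁻¹ ∉ polyhedron I ν a := fun h =>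
    (neg_lt_neg_iff.mp ht).not_ge (h i hi)
  simp [h_notMem]

end Tangent

section ExtremePoints

variable [IsStrictOrderedRing 𝕜] {I : Finset ι} {ν : ι → Module.Dual 𝕜 E} {a : ι → 𝕜} {v : E}

theorem mem_extremePoints_polyhedron_iff (hv : v ∈ polyhedron I ν a) :
    v ∈ (polyhedron I ν a).extremePoints 𝕜 ↔
      ∀ w, (∀ i ∈ activeConstraints I ν a v, ν i w = 0) → w = 0 := by
  constructor
  · intro hv_ext w hw
    have mem_active (u : E) (hu : ∀ i ∈ activeConstraints I ν a v, ν i u = 0) :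
        v + u ∈ polyhedron (activeConstraints I ν a v) ν a := fun i hi => by
      rw [map_add, hu i hi, add_zero]
      exact hv i (mem_filter.mp hi).1
    obtain ⟨t, ⟨ht_add, ht_sub⟩, ht_pos⟩ :=
      (((eventually_lineMap_inv_mem_polyhedron hv (mem_active w hw)).and
        (eventually_lineMap_inv_mem_polyhedron hv
          (mem_active (-w) fun i hi => by rw [map_neg, hw i hi, neg_zero]))).and
        (eventually_gt_atTop 0)).exists
    have midpoint_eq : v ∈ openSegment 𝕜 (AffineMap.lineMap v (v + w) t⁻¹)
        (AffineMap.lineMap v (v + -w) t⁻¹) := by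
      refine ⟨1 / 2, 1 / 2, by norm_num, by norm_num, by norm_num, ?_⟩
      simp only [AffineMap.lineMap_apply_module']
      module
    have h_end := (mem_extremePoints.mp hv_ext).2 _ ht_add _ ht_sub midpoint_eq
    simpa [AffineMap.lineMap_apply_module', ht_pos.ne'] using h_end.1
  · refine fun h => mem_extremePoints_iff_left.mpr ⟨hv, fun x hx y hy hxy => ?_⟩
    obtain ⟨α, β, hα, hβ, hαβ, rfl⟩ := hxy
    refine sub_eq_zero.mp (h _ fun i hi => ?_)
    obtain ⟨hiI, hiv⟩ := mem_filter.mp hi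
    rw [map_sub, hiv, sub_eq_zero]
    refine (hx i hiI).antisymm (le_of_mul_le_mul_left ?_ hα)
    calc
      α * a i = a i - β * a i := by rw [eq_sub_iff_add_eq, ← add_mul, hαβ, one_mul]
      _ ≤ a i - β * ν i y := sub_le_sub_left (mul_le_mul_of_nonneg_left (hy i hiI) hβ.le) _
      _ = α * ν i x := by rw [← hiv]; simp

theorem eq_of_mem_extremePoints_polyhedron {u : E}
    (hv : v ∈ (polyhedron I ν a).extremePoints 𝕜)
    (hu : ∀ i ∈ activeConstraints I ν a v, ν i u = a i) : v = u := by
  refine sub_eq_zero.mp ((mem_extremePoints_polyhedron_iff hv.1).mp hv _ fun i hi => ?_)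
  rw [map_sub, apply_of_mem_activeConstraints hi, hu i hi, sub_self]

theorem finite_extremePoints_polyhedron : ((polyhedron I ν a).extremePoints 𝕜).Finite :=
  Set.Finite.of_injOn (f := activeConstraints I ν a) (t := I.powerset)
    (fun _ _ => mem_coe.mpr (mem_powerset.mpr (filter_subset _ _)))
    (fun _ hv _ _ h_active => eq_of_mem_extremePoints_polyhedron hv fun _ hi =>
      apply_of_mem_activeConstraints (h_active ▸ hi))
    (finite_toSet _)

end ExtremePoints

section ModuloLines

variable [IsStrictOrderedRing 𝕜]
variable {R : Type*} [CommRing R] {I : Finset ι} {ν : ι → Module.Dual 𝕜 E} {a : ι → 𝕜} {v : E}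

theorem indicator_polyhedron_mem_lineConeSpan {s : E} (hs : ∀ i ∈ I, ν i s = a i)
    (h_line : ∃ w, w ≠ 0 ∧ ∀ i ∈ I, ν i w = 0) :
    (polyhedron I ν a).indicator 1 ∈ lineConeSpan 𝕜 R E := by
  obtain ⟨w, hw, hνw⟩ := h_line
  refine Submodule.subset_span ⟨s, {x | ∀ j : Fin #I, ν (I.equivFin.symm j) x ≤ 0},
    ⟨_, fun j => ν (I.equivFin.symm j), rfl⟩, ⟨w, hw, ?_, ?_⟩, ?_⟩
  · exact fun j => (hνw _ (coe_mem _)).le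
  · exact fun j => by rw [map_neg, hνw _ (coe_mem _), neg_zero]
  · refine congrArg (Set.indicator · 1) (Set.ext fun x => ?_)
    simp only [Set.image_add_left, Set.mem_preimage, Set.mem_ofPred_eq, polyhedron,
      I.equivFin.symm.forall_congr_left, Subtype.forall]
    refine forall₂_congr fun i hi => ?_
    simp [hs i hi]

theorem indicator_supportingCone_mem_lineConeSpan (hv : v ∈ polyhedron I ν a)
    (hv_ext : v ∉ (polyhedron I ν a).extremePoints 𝕜) :
    (supportingCone 𝕜 (polyhedron I ν a) v).indicator 1 ∈ lineConeSpan 𝕜 R E := by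
  rw [mem_extremePoints_polyhedron_iff hv] at hv_ext
  push Not at hv_ext
  obtain ⟨w, hνw, hw⟩ := hv_ext
  rw [supportingCone_polyhedron hv]
  exact indicator_polyhedron_mem_lineConeSpan (fun i => apply_of_mem_activeConstraints)
    ⟨w, hw, hνw⟩

theorem exists_isTangentAt_indicator_polyhedron (I : Finset ι) (ν : ι → Module.Dual 𝕜 E)
    (a : ι → 𝕜) (v : E) :
    ∃ g, IsTangentAt 𝕜 ((polyhedron I ν a).indicator (1 : E → R)) v g := by
  by_cases hv : v ∈ polyhedron I ν a
  · exact ⟨_, isTangentAt_indicator_polyhedron_of_mem hv⟩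
  · exact ⟨_, isTangentAt_indicator_polyhedron_of_notMem hv⟩

theorem mkQ_lineConeSpan_of_isTangentAt {g : E → R}
    (hg : IsTangentAt 𝕜 ((polyhedron I ν a).indicator 1) v g) :
    (lineConeSpan 𝕜 R E).mkQ g = ((polyhedron I ν a).extremePoints 𝕜).indicator
      (fun v => (lineConeSpan 𝕜 R E).mkQ
        ((supportingCone 𝕜 (polyhedron I ν a) v).indicator 1)) v := by
  by_cases hv : v ∈ polyhedron I ν a
  · rw [hg.unique (isTangentAt_indicator_polyhedron_of_mem hv)]
    by_cases hv_ext : v ∈ (polyhedron I ν a).extremePoints 𝕜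
    · rw [Set.indicator_of_mem hv_ext]
    · rw [Set.indicator_of_notMem hv_ext, Submodule.mkQ_apply, Submodule.Quotient.mk_eq_zero]
      exact indicator_supportingCone_mem_lineConeSpan hv hv_ext
  · rw [hg.unique (isTangentAt_indicator_polyhedron_of_notMem hv), map_zero,
      Set.indicator_of_notMem fun hv_ext => hv hv_ext.1]

variable (𝕜) in
/-- The functions that are, modulo indicators of cones with lines, the sum over all points of their
tangent functions. -/
def tangentSumSubgroup (R E : Type*) [CommRing R] [AddCommGroup E] [Module 𝕜 E] :
    AddSubgroup (E → R) where
  carrier := {f | ∃ g : E → E → R, (∀ v, IsTangentAt 𝕜 f v (g v)) ∧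
    (fun v => (lineConeSpan 𝕜 R E).mkQ (g v)).HasFiniteSupport ∧
    (lineConeSpan 𝕜 R E).mkQ f = ∑ᶠ v, (lineConeSpan 𝕜 R E).mkQ (g v)}
  zero_mem' := ⟨0, fun v => .const 0 v, by simp [Function.HasFiniteSupport], by simp⟩
  add_mem' := by
    rintro f f' ⟨g, hg, h_fin, h_sum⟩ ⟨g', hg', h_fin', h_sum'⟩
    refine ⟨g + g', fun v => (hg v).add (hg' v), ?_, ?_⟩
    · simpa only [Pi.add_apply, map_add] using h_fin.fun_add h_fin'
    · simp only [Pi.add_apply, map_add, h_sum, h_sum', finsum_add_distrib h_fin h_fin']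
  neg_mem' := by
    rintro f ⟨g, hg, h_fin, h_sum⟩
    refine ⟨-g, fun v => (hg v).neg, ?_, ?_⟩
    · simpa only [Pi.neg_apply, map_neg] using h_fin.fun_neg
    · simp only [Pi.neg_apply, map_neg, h_sum, finsum_neg_distrib]

/-- Away from the apex no point is extreme, so the tangent sum reduces to the tangent
function at the apex, which is the indicator itself. -/
theorem indicator_polyhedron_mem_tangentSumSubgroup_of_apex {s : E} (hs : ∀ i ∈ I, ν i s = a i) :
    (polyhedron I ν a).indicator 1 ∈ tangentSumSubgroup 𝕜 R E := by
  choose g hg using exists_isTangentAt_indicator_polyhedron (R := R) I ν a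
  have mkQ_eq_zero (v : E) (hv : v ≠ s) : (lineConeSpan 𝕜 R E).mkQ (g v) = 0 := by
    rw [mkQ_lineConeSpan_of_isTangentAt (hg v),
      Set.indicator_of_notMem fun hv_ext =>
        hv (eq_of_mem_extremePoints_polyhedron hv_ext fun i hi => hs i (mem_filter.mp hi).1)]
  have g_apex : g s = (polyhedron I ν a).indicator 1 := by
    have hs_mem : s ∈ polyhedron I ν a := fun i hi => (hs i hi).le
    rw [(hg s).unique (isTangentAt_indicator_polyhedron_of_mem hs_mem),
      supportingCone_polyhedron hs_mem, activeConstraints_eq_self hs]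
  refine ⟨g, hg, (Set.finite_singleton s).subset fun v => not_imp_comm.mp (mkQ_eq_zero v), ?_⟩
  rw [finsum_eq_single _ s mkQ_eq_zero, g_apex]

theorem indicator_polyhedron_mem_tangentSumSubgroup (I : Finset ι) (ν : ι → Module.Dual 𝕜 E)
    (a : ι → 𝕜) : (polyhedron I ν a).indicator 1 ∈ tangentSumSubgroup 𝕜 R E :=
  indicator_polyhedron_mem_of_forall_apex _ I ν a fun _ _ _ hs =>
    indicator_polyhedron_mem_tangentSumSubgroup_of_apex hs

end ModuloLines

section MinkowskiWeyl

variable [IsStrictOrderedRing 𝕜]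

theorem exists_nonneg_forall_mul_le_iff {s : Finset ι} {p q : ι → 𝕜} :
    (∃ t, 0 ≤ t ∧ ∀ i ∈ s, t * p i ≤ q i) ↔
      (∀ i ∈ s, 0 ≤ p i → 0 ≤ q i) ∧
        ∀ i ∈ s, ∀ j ∈ s, 0 < p i → p j < 0 → 0 ≤ p i * q j - p j * q i := by
  constructor
  · rintro ⟨t, ht, h⟩
    refine ⟨fun i hi hpi => (mul_nonneg ht hpi).trans (h i hi), fun i hi j hj hpi hpj => ?_⟩
    have hi_mul : p j * q i ≤ p j * (t * p i) := mul_le_mul_of_nonpos_left (h i hi) hpj.le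
    have hj_mul : p i * (t * p j) ≤ p i * q j := mul_le_mul_of_nonneg_left (h j hj) hpi.le
    linarith
  · rintro ⟨h_nonneg, h_cross⟩
    obtain ⟨t, ht_mem, ht_max⟩ := exists_max_image
      (insert 0 ({j ∈ s | p j < 0}.image fun j => q j / p j)) id (insert_nonempty _ _)
    have le_t {j : ι} (hj : j ∈ s) (hpj : p j < 0) : q j / p j ≤ t :=
      ht_max _ (mem_insert_of_mem (mem_image_of_mem _ (mem_filter.mpr ⟨hj, hpj⟩)))
    refine ⟨t, ht_max 0 (mem_insert_self _ _), fun i hi => ?_⟩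
    rcases lt_trichotomy (p i) 0 with hpi | hpi | hpi
    · exact (div_le_iff_of_neg hpi).mp (le_t hi hpi)
    · simpa [hpi] using h_nonneg i hi hpi.ge
    · rcases mem_insert.mp ht_mem with rfl | ht_mem
      · simpa using h_nonneg i hi hpi.le
      · obtain ⟨j, hj, rfl⟩ := mem_image.mp ht_mem
        obtain ⟨hj, hpj⟩ := mem_filter.mp hj
        rw [div_mul_eq_mul_div, div_le_iff_of_neg hpj]
        linarith [h_cross i hi j hj hpi hpj]

/-- Fourier–Motzkin elimination of the coefficient `t` in `x = y + t • a`, `y ∈ C`. -/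
theorem dualFG_sup_hull_singleton {C : PointedCone 𝕜 E} (hC : C.DualFG .id) (a : E) :
    (C ⊔ PointedCone.hull 𝕜 {a}).DualFG .id := by
  classical
  obtain ⟨s, rfl⟩ := hC
  refine ⟨{φ ∈ s | 0 ≤ φ a} ∪ ({φ ∈ s | 0 < φ a} ×ˢ {ψ ∈ s | ψ a < 0}).image
    fun φψ => φψ.1 a • φψ.2 - φψ.2 a • φψ.1, SetLike.ext fun x => ?_⟩
  calc
    _ ↔ (∀ φ ∈ s, 0 ≤ φ a → 0 ≤ φ x) ∧
        ∀ φ ∈ s, ∀ ψ ∈ s, 0 < φ a → ψ a < 0 → 0 ≤ φ a * ψ x - ψ a * φ x := by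
      rw [coe_union, PointedCone.dual_union, Submodule.mem_inf, coe_image]
      refine and_congr (by simp) ?_
      simp only [PointedCone.mem_dual, Set.forall_mem_image, mem_coe, mem_product, mem_filter,
        Prod.forall, and_imp, LinearMap.id_apply, LinearMap.sub_apply, LinearMap.smul_apply,
        smul_eq_mul]
      grind
    _ ↔ ∃ t, 0 ≤ t ∧ ∀ φ ∈ s, t * φ a ≤ φ x := exists_nonneg_forall_mul_le_iff.symm
    _ ↔ _ := by
      constructor
      · rintro ⟨t, ht, h⟩
        refine Submodule.mem_sup.mpr ⟨x - t • a, fun φ hφ => ?_, t • a,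
          Submodule.mem_span_singleton.mpr ⟨⟨t, ht⟩, rfl⟩, sub_add_cancel x _⟩
        simpa using h φ hφ
      · intro hx
        obtain ⟨y, hy, z, hz, rfl⟩ := Submodule.mem_sup.mp hx
        obtain ⟨⟨t, ht⟩, rfl⟩ := Submodule.mem_span_singleton.mp hz
        refine ⟨t, ht, fun φ hφ => ?_⟩
        simpa using hy hφ

theorem dualFG_bot [FiniteDimensional 𝕜 E] :
    (⊥ : PointedCone 𝕜 E).DualFG .id := by
  classical
  let b := Module.finBasis 𝕜 E
  refine ⟨univ.image b.coord ∪ univ.image (-b.coord), SetLike.ext fun x => ?_⟩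
  simp [or_imp, forall_and, b.ext_elem_iff, PointedCone.mem_dual, le_antisymm_iff, and_comm]

theorem dualFG_of_fg [FiniteDimensional 𝕜 E] {C : PointedCone 𝕜 E} (hC : C.FG) :
    C.DualFG .id := by
  classical
  obtain ⟨s, rfl⟩ := hC
  induction s using Finset.induction_on with
  | empty => simpa using dualFG_bot
  | insert a s _ ih =>
    rw [coe_insert, Submodule.span_insert, sup_comm]
    exact dualFG_sup_hull_singleton ih a

theorem mem_hull_image_finset_iff {s : Finset ι} {v : ι → E} {x : E} :
    x ∈ PointedCone.hull 𝕜 (v '' s) ↔ ∃ w : ι → 𝕜, (∀ i ∈ s, 0 ≤ w i) ∧ ∑ i ∈ s, w i • v i = x := by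
  rw [Submodule.mem_span_image_finset_iff_exists_fun']
  constructor
  · rintro ⟨c, hc⟩
    exact ⟨fun i => c i, fun i _ => (c i).2, hc⟩
  · rintro ⟨w, hw, rfl⟩
    refine ⟨fun i => ⟨max (w i) 0, le_max_right _ _⟩, sum_congr rfl fun i hi => ?_⟩
    rw [Nonneg.mk_smul, max_eq_left (hw i hi)]

theorem mem_convexHull_iff_prodMk_one_mem_hull {S : Finset E} {x : E} :
    x ∈ convexHull 𝕜 (S : Set E) ↔
      (x, (1 : 𝕜)) ∈ PointedCone.hull 𝕜 ((fun y => (y, (1 : 𝕜))) '' (S : Set E)) := by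
  rw [Finset.mem_convexHull', mem_hull_image_finset_iff]
  simp [Prod.ext_iff, Prod.fst_sum, Prod.snd_sum, and_comm]

theorem isPolyhedron_convexHull [FiniteDimensional 𝕜 E] (S : Finset E) :
    IsPolyhedron 𝕜 (convexHull 𝕜 (S : Set E)) := by
  classical
  have hull_fg : (PointedCone.hull 𝕜 ((fun y => (y, (1 : 𝕜))) '' (S : Set E))).FG :=
    Submodule.fg_span (S.finite_toSet.image _)
  obtain ⟨s, hs⟩ := dualFG_of_fg hull_fg
  refine ⟨s.image fun φ => (-φ ∘ₗ LinearMap.inl 𝕜 E 𝕜, φ (0, 1)), Set.ext fun x => ?_⟩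
  rw [mem_convexHull_iff_prodMk_one_mem_hull, ← hs]
  have apply_prodMk_one (φ : Module.Dual 𝕜 (E × 𝕜)) : φ (x, 1) = φ (0, 1) + φ (x, 0) := by
    rw [← map_add, Prod.mk_add_mk, add_zero, zero_add]
  simp [polyhedron, apply_prodMk_one, neg_le_iff_add_nonneg]

end MinkowskiWeyl

end Brion

open Brion in
theorem stmt_4_general {𝕜 E : Type*} [Field 𝕜] [LinearOrder 𝕜] [IsStrictOrderedRing 𝕜]
    [AddCommGroup E] [Module 𝕜 E] (R : Type*) [CommRing R] {P : Set E} (hP : IsPolyhedron 𝕜 P) :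
    (P.indicator (fun _ => (1 : R)) - fun x => ∑ᶠ v ∈ P.extremePoints 𝕜,
      (supportingCone 𝕜 P v).indicator (fun _ => (1 : R)) x) ∈ lineConeSpan 𝕜 R E := by
  obtain ⟨H, rfl⟩ := hP
  set P := polyhedron H Prod.fst Prod.snd
  have ext_finite : (P.extremePoints 𝕜).Finite := finite_extremePoints_polyhedron
  have sum_eq : (fun x => ∑ᶠ v ∈ P.extremePoints 𝕜, (supportingCone 𝕜 P v).indicator 1 x) =
      ∑ᶠ v ∈ P.extremePoints 𝕜, (supportingCone 𝕜 P v).indicator (1 : E → R) := by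
    ext x
    simp only [finsum_mem_eq_finite_toFinset_sum _ ext_finite, Finset.sum_apply]
  obtain ⟨g, hg, -, h_sum⟩ :=
    indicator_polyhedron_mem_tangentSumSubgroup (R := R) H Prod.fst Prod.snd
  change P.indicator 1 - (fun x => ∑ᶠ v ∈ P.extremePoints 𝕜,
    (supportingCone 𝕜 P v).indicator 1 x) ∈ _
  rw [sum_eq, ← Submodule.Quotient.mk_eq_zero, ← Submodule.mkQ_apply, map_sub, sub_eq_zero, h_sum,
    ← LinearMap.toAddMonoidHom_coe, AddMonoidHom.map_finsum_mem _ _ ext_finite, finsum_mem_def]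
  exact finsum_congr fun v => mkQ_lineConeSpan_of_isTangentAt (hg v)

theorem stmt_4
    (d : ℕ)
    -- P is a polytope: the convex hull of a finite set of points
    (S : Finset (Fin d → ℝ)) (P : Set (Fin d → ℝ))
    (hP : P = convexHull ℝ (↑S : Set (Fin d → ℝ)))
    -- T v is the supporting cone of P at v
    (T : (Fin d → ℝ) → Set (Fin d → ℝ))
    (hT : ∀ v, T v = {y | ∃ w : Fin d → ℝ,
      y = v + w ∧ ∃ ε : ℝ, 0 < ε ∧ v + ε • w ∈ P}) :
    -- 𝟙_P − Σ_{v ∈ ext(P)} 𝟙_{T_v} lies in the span of indicators of shifted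
    -- polyhedral cones containing a line
    (Set.indicator P (fun _ => (1 : ℝ)) -
        fun x => ∑ᶠ v ∈ Set.extremePoints ℝ P,
          Set.indicator (T v) (fun _ => (1 : ℝ)) x)
      ∈ Submodule.span ℝ {f : (Fin d → ℝ) → ℝ |
          ∃ (s : Fin d → ℝ) (C : Set (Fin d → ℝ)),
            (∃ (n : ℕ) (ν : Fin n → ((Fin d → ℝ) →ₗ[ℝ] ℝ)), C = {x | ∀ i, ν i x ≤ 0}) ∧
            (∃ w : Fin d → ℝ, w ≠ 0 ∧ w ∈ C ∧ -w ∈ C) ∧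
            f = Set.indicator ((fun y => s + y) '' C) (fun _ => (1 : ℝ))} := by
  obtain rfl : T = Brion.supportingCone ℝ P := funext hT
  exact stmt_4_general ℝ (hP ▸ Brion.isPolyhedron_convexHull S)
end

section
/- Let d ≥ 1, let 0 ≤ k ≤ d − 1, let s_1, …, s_{d+1} ∈ ℝ^d be affinely independent, let 𝓛 be the family of subspaces L_I associated to subpartitions of {1, …, d+1} with blocks of size ≥ d − k + 1 (a family closed under sums), and let ρ be its patching function. Then for every subpartition I = {I_1, …, I_r}, ρ(L_I) = (−1)^{r−1} · ρ(L_{{I_1}}) · ρ(L_{{I_2}}) ⋯ ρ(L_{{I_r}}), where {I_l} denotes the single-block subpartition with block I_l. Moreover ρ(L_I) depends only on the block sizes |I_1|, …, |I_r|. -/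
/-!
Adjoin an empty subpartition to the poset of subpartitions ordered by refinement. Labelling the
points injectively on the blocks of `I` gives a functional `ξ` which vanishes on `L_J` exactly when
`J` refines `I`. Evaluating the patching identity at `ξ` shows that the values `ρ(L_J)` over the
nonempty `J ≤ I` sum to `1`, that is, `ρ(L_I) = -μ(∅, I)`. Below `I` the poset is the product, over
the blocks `C` of `I`, of the posets below `{C}`, so `μ(∅, I)` is the product of the `μ(∅, {C})`;
and `μ(∅, {C})` depends only on `|C|` because permutations of the points act on the poset.
-/

open Finset IncidenceAlgebra

section MoebiusFromBot

variable {P Q R : Type*} [PartialOrder P] [OrderBot P] [LocallyFiniteOrder P] [DecidableEq P]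

theorem eq_mu_bot_of_sum_Icc [AddCommGroup R] [One R] {g : P → R} {a : P}
    (hg : ∀ b ≤ a, ∑ x ∈ Icc ⊥ b, g x = if b = ⊥ then 1 else 0) : g a = mu R ⊥ a := by
  induction hs : Icc ⊥ a using Finset.strongInduction generalizing a with
  | H s ih =>
    subst hs
    have hlt : ∀ x ∈ Ico ⊥ a, g x = mu R ⊥ x := fun x hx ↦
      have hxa := (mem_Ico.1 hx).2
      ih _ (Icc_ssubset_Icc_right bot_le le_rfl hxa) (fun b hb ↦ hg b (hb.trans hxa.le)) rfl
    have hsum : ∑ x ∈ Icc ⊥ a, g x = ∑ x ∈ Icc ⊥ a, mu R ⊥ x := by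
      simp only [hg a le_rfl, sum_Icc_mu_right, eq_comm]
    simpa only [Icc_eq_cons_Ico bot_le, sum_cons, sum_congr rfl hlt, add_left_inj] using hsum

theorem eq_neg_mu_bot_of_sum_Ioc [AddCommGroup R] [One R] {g : P → R}
    (hg : ∀ b ≠ ⊥, ∑ x ∈ Ioc ⊥ b, g x = 1) {a : P} (ha : a ≠ ⊥) : g a = -mu R ⊥ a := by
  rw [← eq_mu_bot_of_sum_Icc (g := Function.update (-g) ⊥ 1) fun b _ ↦ ?_,
    Function.update_of_ne ha, Pi.neg_apply, neg_neg]
  have hne : ∀ x ∈ Ioc ⊥ b, Function.update (-g) ⊥ 1 x = -g x := fun x hx ↦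
    Function.update_of_ne (mem_Ioc.1 hx).1.ne' _ _
  rw [Icc_eq_cons_Ioc bot_le, sum_cons, Function.update_self, sum_congr rfl hne, sum_neg_distrib]
  split_ifs with hb
  · simp [hb]
  · rw [hg b hb, add_neg_cancel]

theorem mu_bot_orderIso [AddCommGroup R] [One R] [PartialOrder Q] [OrderBot Q]
    [LocallyFiniteOrder Q] [DecidableEq Q] (e : P ≃o Q) (a : P) :
    mu R ⊥ (e a) = mu R ⊥ a := by
  refine eq_mu_bot_of_sum_Icc (g := fun x ↦ mu R ⊥ (e x)) fun b _ ↦ ?_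
  have hsum : ∑ x ∈ Icc ⊥ b, mu R ⊥ (e x) = ∑ y ∈ Icc ⊥ (e b), mu R ⊥ y :=
    sum_equiv e.toEquiv (fun x ↦ by simp) fun _ _ ↦ rfl
  rw [hsum, sum_Icc_mu_right]
  simp only [eq_comm (a := (⊥ : Q)), map_eq_bot_iff]

end MoebiusFromBot

/-- The subpartitions with blocks of size greater than `m`, as families of blocks. -/
def IsSubpartition {ι : Type*} (m : ℕ) (I : Finset (Finset ι)) : Prop :=
  I.Nonempty ∧ (∀ B ∈ I, m < #B) ∧ (I : Set (Finset ι)).Pairwise Disjoint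

/-- The poset of subpartitions with blocks of size greater than `m`, ordered by refinement. Unlike
`IsSubpartition`, it includes the empty subpartition, which is the bottom element. -/
@[ext]
structure Subpartition (ι : Type*) (m : ℕ) where
  blocks : Finset (Finset ι)
  lt_card : ∀ B ∈ blocks, m < #B
  pairwise_disjoint : (blocks : Set (Finset ι)).Pairwise Disjoint

namespace Subpartition

variable {ι : Type*} {m : ℕ} {I J K : Subpartition ι m} {B C : Finset ι}

theorem nonempty_of_mem (hB : B ∈ I.blocks) : B.Nonempty :=
  card_pos.1 ((Nat.zero_le m).trans_lt (I.lt_card B hB))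

theorem eq_of_mem {i : ι} (hB : B ∈ I.blocks) (hC : C ∈ I.blocks) (hiB : i ∈ B) (hiC : i ∈ C) :
    B = C := by
  by_contra hne
  exact disjoint_left.1 (I.pairwise_disjoint hB hC hne) hiB hiC

theorem eq_of_subset (hB : B ∈ I.blocks) (hC : C ∈ I.blocks) (hBC : B ⊆ C) : B = C :=
  have ⟨_, hi⟩ := nonempty_of_mem hB
  eq_of_mem hB hC hi (hBC hi)

instance : LE (Subpartition ι m) where
  le I J := ∀ B ∈ I.blocks, ∃ C ∈ J.blocks, B ⊆ C

theorem le_def : I ≤ J ↔ ∀ B ∈ I.blocks, ∃ C ∈ J.blocks, B ⊆ C := Iff.rfl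

theorem blocks_subset_of_le_of_le (hIJ : I ≤ J) (hJI : J ≤ I) : I.blocks ⊆ J.blocks := by
  intro B hB
  obtain ⟨C, hC, hBC⟩ := hIJ B hB
  obtain ⟨D, hD, hCD⟩ := hJI C hC
  obtain rfl : B = D := eq_of_subset hB hD (hBC.trans hCD)
  rwa [hBC.antisymm hCD]

instance : PartialOrder (Subpartition ι m) where
  le_refl _ B hB := ⟨B, hB, Subset.rfl⟩
  le_trans _ _ _ hIJ hJK B hB :=
    have ⟨_, hC, hBC⟩ := hIJ B hB
    have ⟨D, hD, hCD⟩ := hJK _ hC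
    ⟨D, hD, hBC.trans hCD⟩
  le_antisymm _ _ hIJ hJI := Subpartition.ext <|
    (blocks_subset_of_le_of_le hIJ hJI).antisymm (blocks_subset_of_le_of_le hJI hIJ)

instance : OrderBot (Subpartition ι m) where
  bot := ⟨∅, by simp, by simp⟩
  bot_le _ _ hB := absurd hB (notMem_empty _)

theorem blocks_bot : (⊥ : Subpartition ι m).blocks = ∅ := rfl

theorem blocks_eq_empty_iff : I.blocks = ∅ ↔ I = ⊥ :=
  ⟨fun h ↦ Subpartition.ext h, fun h ↦ h ▸ blocks_bot⟩

instance [Finite ι] : Finite (Subpartition ι m) :=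
  Finite.of_injective blocks fun _ _ ↦ Subpartition.ext

noncomputable instance : DecidableEq (Subpartition ι m) := Classical.decEq _

open Classical in
noncomputable instance [Finite ι] : LocallyFiniteOrder (Subpartition ι m) :=
  letI := Fintype.ofFinite (Subpartition ι m)
  Fintype.toLocallyFiniteOrder

theorem isSubpartition_blocks (hI : I ≠ ⊥) : IsSubpartition m I.blocks :=
  ⟨nonempty_iff_ne_empty.2 (blocks_eq_empty_iff.not.2 hI), I.lt_card, I.pairwise_disjoint⟩

section Inside

open Classical in
/-- The subpartition formed by the blocks of `I` contained in `C`. -/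
noncomputable def inside (I : Subpartition ι m) (C : Finset ι) : Subpartition ι m where
  blocks := {B ∈ I.blocks | B ⊆ C}
  lt_card B hB := I.lt_card B (mem_of_mem_filter B hB)
  pairwise_disjoint := I.pairwise_disjoint.mono (coe_subset.2 (filter_subset _ _))

theorem mem_inside : B ∈ (I.inside C).blocks ↔ B ∈ I.blocks ∧ B ⊆ C := by
  classical exact mem_filter

theorem inside_mono (hIJ : I ≤ J) (hJK : J ≤ K) (hC : C ∈ K.blocks) :
    I.inside C ≤ J.inside C := by
  intro B hB
  obtain ⟨hBI, hBC⟩ := mem_inside.1 hB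
  obtain ⟨D, hD, hBD⟩ := hIJ B hBI
  obtain ⟨E, hE, hDE⟩ := hJK D hD
  obtain ⟨i, hi⟩ := nonempty_of_mem hBI
  obtain rfl : E = C := eq_of_mem hE hC (hDE (hBD hi)) (hBC hi)
  exact ⟨D, mem_inside.2 ⟨hD, hDE⟩, hBD⟩

theorem eq_of_forall_inside_eq (hI : I ≤ K) (hJ : J ≤ K)
    (h : ∀ C ∈ K.blocks, I.inside C = J.inside C) : I = J := by
  have hsub : ∀ {I J : Subpartition ι m}, I ≤ K → (∀ C ∈ K.blocks, I.inside C = J.inside C) →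
      I.blocks ⊆ J.blocks := by
    intro I J hI h B hB
    obtain ⟨C, hC, hBC⟩ := hI B hB
    exact (mem_inside.1 (h C hC ▸ mem_inside.2 ⟨hB, hBC⟩)).1
  exact Subpartition.ext ((hsub hI h).antisymm (hsub hJ fun C hC ↦ (h C hC).symm))

theorem forall_inside_eq_bot_iff (hI : I ≤ K) :
    (∀ C : K.blocks, I.inside C = ⊥) ↔ I = ⊥ := by
  have hbot : ∀ C, (⊥ : Subpartition ι m).inside C = ⊥ := fun C ↦ by
    classical exact Subpartition.ext (filter_empty _)
  refine ⟨fun h ↦ eq_of_forall_inside_eq hI bot_le fun C hC ↦ ?_, fun h C ↦ h ▸ hbot C⟩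
  rw [h ⟨C, hC⟩, hbot]

theorem exists_le_inside_eq (x : K.blocks → Subpartition ι m)
    (hx : ∀ C : K.blocks, x C ≤ J.inside C) : ∃ I ≤ J, ∀ C : K.blocks, I.inside C = x C := by
  classical
  have hsub : ∀ {C : K.blocks} {B}, B ∈ (x C).blocks → B ⊆ C := fun {C B} hB ↦
    have ⟨_, hD, hBD⟩ := hx C B hB
    hBD.trans (mem_inside.1 hD).2
  let I : Subpartition ι m :=
    { blocks := univ.biUnion fun C ↦ (x C).blocks
      lt_card := by
        simp only [mem_biUnion, mem_univ, true_and]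
        rintro B ⟨C, hB⟩
        exact (x C).lt_card B hB
      pairwise_disjoint := by
        simp only [Set.Pairwise, mem_coe, mem_biUnion, mem_univ, true_and]
        rintro B ⟨C, hB⟩ B' ⟨C', hB'⟩ hne
        obtain rfl | hCC' := eq_or_ne C C'
        · exact (x C).pairwise_disjoint hB hB' hne
        · exact disjoint_of_subset_left (hsub hB) <| disjoint_of_subset_right (hsub hB') <|
            K.pairwise_disjoint C.2 C'.2 (Subtype.coe_ne_coe.2 hCC') }
  have mem_I : ∀ {B}, B ∈ I.blocks ↔ ∃ C, B ∈ (x C).blocks := by simp [I]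
  refine ⟨I, fun B hB ↦ ?_, fun C ↦ Subpartition.ext <| Finset.ext fun B ↦ ?_⟩
  · obtain ⟨C, hB⟩ := mem_I.1 hB
    obtain ⟨D, hD, hBD⟩ := hx C B hB
    exact ⟨D, (mem_inside.1 hD).1, hBD⟩
  · rw [mem_inside, mem_I]
    refine ⟨?_, fun hB ↦ ⟨⟨C, hB⟩, hsub hB⟩⟩
    rintro ⟨⟨C', hB⟩, hBC⟩
    obtain ⟨i, hi⟩ := nonempty_of_mem hB
    obtain rfl : C' = C := Subtype.ext (eq_of_mem C'.2 C.2 (hsub hB hi) (hBC hi))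
    exact hB

theorem sum_Icc_prod_inside [Finite ι] {R : Type*} [CommSemiring R] (f : Subpartition ι m → R)
    (hJ : J ≤ K) :
    ∑ I ∈ Icc ⊥ J, ∏ C : K.blocks, f (I.inside C) =
      ∏ C : K.blocks, ∑ I ∈ Icc ⊥ (J.inside C), f I := by
  classical
  rw [prod_univ_sum]
  refine sum_bij (fun I _ C ↦ I.inside C) (fun I hI ↦ ?_) (fun I hI I' hI' h ↦ ?_)
    (fun x hx ↦ ?_) fun _ _ ↦ rfl
  · exact Fintype.mem_piFinset.2 fun C ↦
      mem_Icc.2 ⟨bot_le, inside_mono (mem_Icc.1 hI).2 hJ C.2⟩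
  · exact eq_of_forall_inside_eq ((mem_Icc.1 hI).2.trans hJ) ((mem_Icc.1 hI').2.trans hJ)
      fun C hC ↦ congrFun h ⟨C, hC⟩
  · obtain ⟨I, hIJ, hI⟩ :=
      exists_le_inside_eq x fun C ↦ (mem_Icc.1 (Fintype.mem_piFinset.1 hx C)).2
    exact ⟨I, mem_Icc.2 ⟨bot_le, hIJ⟩, funext hI⟩

theorem mu_bot_eq_prod_inside [Finite ι] {R : Type*} [CommRing R] (K : Subpartition ι m) :
    mu R ⊥ K = ∏ C ∈ K.blocks, mu R ⊥ (K.inside C) := by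
  rw [← prod_coe_sort]
  refine (eq_mu_bot_of_sum_Icc
    (g := fun J : Subpartition ι m ↦ ∏ C : K.blocks, mu R ⊥ (J.inside C)) fun J hJ ↦ ?_).symm
  rw [sum_Icc_prod_inside _ hJ]
  simp only [sum_Icc_mu_right, prod_boole, mem_univ, forall_const, eq_comm (a := ⊥),
    forall_inside_eq_bot_iff hJ]

end Inside

section Relabelling

variable {κ : Type*}

/-- The image of a subpartition under an embedding of the ground set. -/
def map (e : ι ↪ κ) (I : Subpartition ι m) : Subpartition κ m where
  blocks := I.blocks.map (mapEmbedding e).toEmbedding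
  lt_card := by simpa [mapEmbedding_apply] using I.lt_card
  pairwise_disjoint := by
    rw [coe_map, Set.InjOn.pairwise_image (Function.Embedding.injective _).injOn]
    simpa [Set.Pairwise, Function.onFun, mapEmbedding_apply] using I.pairwise_disjoint

theorem mem_map_blocks {e : ι ↪ κ} {C : Finset κ} :
    C ∈ (I.map e).blocks ↔ ∃ B ∈ I.blocks, B.map e = C := mem_map

/-- Bijective relabelling of the ground set, as an isomorphism of refinement posets. -/
def mapOrderIso (σ : ι ≃ κ) : Subpartition ι m ≃o Subpartition κ m where
  toFun := map σ.toEmbedding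
  invFun := map σ.symm.toEmbedding
  left_inv I := Subpartition.ext <| by ext; simp [mem_map_blocks, map_map]
  right_inv I := Subpartition.ext <| by ext; simp [mem_map_blocks, map_map]
  map_rel_iff' {I J} := by simp [le_def, mem_map_blocks]

open Classical in
/-- The subpartition with the single block `B`, or the empty one if `B` is too small. -/
noncomputable def ofBlock (m : ℕ) (B : Finset ι) : Subpartition ι m where
  blocks := {C ∈ {B} | m < #C}
  lt_card C hC := (mem_filter.1 hC).2
  pairwise_disjoint := by
    refine Set.Pairwise.mono (coe_subset.2 (filter_subset _ _)) ?_
    simp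

theorem mem_ofBlock : C ∈ (ofBlock m B).blocks ↔ C = B ∧ m < #C := by
  simp [ofBlock]

theorem blocks_ofBlock (hB : m < #B) : (ofBlock m B).blocks = {B} := by
  ext C
  rw [mem_ofBlock, mem_singleton]
  exact and_iff_left_of_imp fun h ↦ h ▸ hB

theorem inside_eq_ofBlock (hC : C ∈ K.blocks) : K.inside C = ofBlock m C := by
  refine Subpartition.ext <| Finset.ext fun B ↦ ?_
  rw [mem_inside, mem_ofBlock]
  constructor
  · rintro ⟨hB, hBC⟩
    exact ⟨eq_of_subset hB hC hBC, K.lt_card B hB⟩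
  · rintro ⟨rfl, -⟩
    exact ⟨hC, Subset.rfl⟩

theorem map_ofBlock (e : ι ↪ κ) (B : Finset ι) :
    (ofBlock m B).map e = ofBlock m (B.map e) := by
  refine Subpartition.ext <| Finset.ext fun C ↦ ?_
  simp only [mem_map_blocks, mem_ofBlock]
  constructor
  · rintro ⟨_, ⟨rfl, hB⟩, rfl⟩
    exact ⟨rfl, by rwa [card_map]⟩
  · rintro ⟨rfl, hB⟩
    exact ⟨B, ⟨rfl, by rwa [card_map] at hB⟩, rfl⟩

end Relabelling

section Moebius

variable [Finite ι] {R : Type*} [CommRing R]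

theorem mu_bot_eq_prod_ofBlock (I : Subpartition ι m) :
    mu R ⊥ I = ∏ B ∈ I.blocks, mu R ⊥ (ofBlock m B) := by
  rw [mu_bot_eq_prod_inside]
  exact prod_congr rfl fun B hB ↦ by rw [inside_eq_ofBlock hB]

theorem mu_bot_ofBlock_eq_of_card_eq (h : #B = #C) :
    mu R ⊥ (ofBlock m B) = mu R ⊥ (ofBlock m C) := by
  obtain ⟨σ, rfl⟩ := Equiv.Perm.exists_map_finset_eq B C h
  rw [← map_ofBlock]
  exact (mu_bot_orderIso (mapOrderIso σ) _).symm

theorem mu_bot_eq_of_map_card_eq (h : I.blocks.val.map card = J.blocks.val.map card) :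
    mu R ⊥ I = mu R ⊥ J := by
  obtain ⟨f, hf⟩ : ∃ f : ℕ → R, (fun B : Finset ι ↦ mu R ⊥ (ofBlock m B)) = f ∘ card :=
    (Function.factorsThrough_iff _).1 fun _ _ ↦ mu_bot_ofBlock_eq_of_card_eq
  have mu_eq : ∀ K : Subpartition ι m, mu R ⊥ K = ((K.blocks.val.map card).map f).prod :=
    fun K ↦ by rw [mu_bot_eq_prod_ofBlock, Multiset.map_map, ← hf, Finset.prod]
  rw [mu_eq, mu_eq, h]

end Moebius

section Labelling

/-- The equivalence relation on the points whose classes are the blocks and the singletons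
outside them. -/
def setoid (I : Subpartition ι m) : Setoid ι where
  r i j := i = j ∨ ∃ B ∈ I.blocks, i ∈ B ∧ j ∈ B
  iseqv :=
    { refl _ := .inl rfl
      symm := by
        rintro i j (rfl | ⟨B, hB, hi, hj⟩)
        exacts [.inl rfl, .inr ⟨B, hB, hj, hi⟩]
      trans := by
        rintro i j l (rfl | ⟨B, hB, hi, hj⟩) (rfl | ⟨C, hC, hj', hl⟩)
        · exact .inl rfl
        · exact .inr ⟨C, hC, hj', hl⟩
        · exact .inr ⟨B, hB, hi, hj⟩
        · exact .inr ⟨B, hB, hi, eq_of_mem hB hC hj hj' ▸ hl⟩ }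

theorem setoid_iff {i j : ι} : I.setoid i j ↔ i = j ∨ ∃ B ∈ I.blocks, i ∈ B ∧ j ∈ B := Iff.rfl

theorem le_iff_forall_setoid (hm : 1 ≤ m) :
    J ≤ I ↔ ∀ B ∈ J.blocks, ∀ i ∈ B, ∀ j ∈ B, I.setoid i j := by
  refine forall₂_congr fun B hB ↦ ⟨?_, fun h ↦ ?_⟩
  · rintro ⟨C, hC, hBC⟩ i hi j hj
    exact .inr ⟨C, hC, hBC hi, hBC hj⟩
  · obtain ⟨i, hi, j, hj, hij⟩ := one_lt_card.1 (hm.trans_lt (J.lt_card B hB))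
    obtain ⟨C, hC, hiC, -⟩ := (setoid_iff.1 (h i hi j hj)).resolve_left hij
    refine ⟨C, hC, fun l hl ↦ ?_⟩
    obtain rfl | ⟨D, hD, hiD, hlD⟩ := setoid_iff.1 (h i hi l hl)
    · exact hiC
    · exact eq_of_mem hC hD hiC hiD ▸ hlD

theorem exists_labelling [Finite ι] (K : Type*) [Infinite K] (I : Subpartition ι m) :
    ∃ f : ι → K, ∀ i j, f i = f j ↔ I.setoid i j := by
  obtain ⟨n, ⟨e⟩⟩ := Finite.exists_equiv_fin (Quotient I.setoid)
  let label : Quotient I.setoid ↪ K :=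
    e.toEmbedding.trans (Fin.valEmbedding.trans (Infinite.natEmbedding K))
  exact ⟨fun i ↦ label ⟦i⟧, fun i j ↦ label.injective.eq_iff.trans Quotient.eq⟩

end Labelling

end Subpartition

section AffineSpan

variable {K V P ι : Type*} [Field K] [AddCommGroup V] [Module K V]

theorem exists_dual_vsub_eq_sub [AddTorsor V P] {s : ι → P} (hs : AffineIndependent K s)
    (f : ι → K) : ∃ ξ : Module.Dual K V, ∀ i j, ξ (s i -ᵥ s j) = f i - f j := by
  obtain hι | ⟨⟨o⟩⟩ := isEmpty_or_nonempty ι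
  · exact ⟨0, fun i ↦ hι.elim i⟩
  have hli := (affineIndependent_iff_linearIndependent_vsub K s o).1 hs
  let basis := Module.Basis.span hli
  obtain ⟨ξ, hξ⟩ := LinearMap.exists_extend (basis.constr K fun i : {i // i ≠ o} ↦ f i - f o)
  have apply_vsub_base : ∀ i, ξ (s i -ᵥ s o) = f i - f o := by
    intro i
    obtain rfl | hi := eq_or_ne i o
    · simp
    · have h := LinearMap.congr_fun hξ (basis ⟨i, hi⟩)
      rwa [Module.Basis.constr_basis, LinearMap.comp_apply, Submodule.subtype_apply,
        Module.Basis.span_apply] at h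
  refine ⟨ξ, fun i j ↦ ?_⟩
  rw [← vsub_sub_vsub_cancel_right (s i) (s j) (s o), map_sub, apply_vsub_base, apply_vsub_base,
    sub_sub_sub_cancel_right]

theorem vectorSpan_image_eq_span_sub (s : ι → V) (B : Set ι) :
    vectorSpan K (s '' B) = Submodule.span K {x | ∃ i ∈ B, ∃ j ∈ B, x = s i - s j} := by
  refine congrArg (Submodule.span K) <| Set.ext fun x ↦ ?_
  simp [Set.mem_vsub, eq_comm]

/-- The sum `L_I` of the direction spaces of the affine spans of the blocks `B ∈ I`. -/
def blockSpanSum [AddTorsor V P] (K : Type*) [Field K] [Module K V] (s : ι → P)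
    (I : Finset (Finset ι)) : Submodule K V :=
  I.sup fun B ↦ vectorSpan K (s '' B)

theorem mem_dualAnnihilator_blockSpanSum [AddTorsor V P] {s : ι → P} {I : Finset (Finset ι)}
    {ξ : Module.Dual K V} :
    ξ ∈ (blockSpanSum K s I).dualAnnihilator ↔
      ∀ B ∈ I, ∀ i ∈ B, ∀ j ∈ B, ξ (s i -ᵥ s j) = 0 := by
  have mem_iff_le_ker : ∀ L : Submodule K V, ξ ∈ L.dualAnnihilator ↔ L ≤ LinearMap.ker ξ :=
    fun _ ↦ Submodule.mem_dualAnnihilator ξ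
  simp only [mem_iff_le_ker, blockSpanSum, Finset.sup_le_iff, vectorSpan_def, Submodule.span_le,
    Set.vsub_subset_iff, Set.forall_mem_image, SetLike.mem_coe, LinearMap.mem_ker]

end AffineSpan

/-- `ρ` is the patching function of `𝓛`: it writes the indicator function of the union of the
annihilators of the members of `𝓛` as a combination of their indicator functions. -/
def IsPatchingFunction {K V R : Type*} [Field K] [AddCommGroup V] [Module K V] [Semiring R]
    (𝓛 : Set (Submodule K V)) (ρ : Submodule K V → R) : Prop :=
  ∀ ξ : Module.Dual K V,
    Set.indicator (⋃ M ∈ 𝓛, (M.dualAnnihilator : Set (Module.Dual K V))) (fun _ ↦ (1 : R)) ξ =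
      ∑ᶠ M ∈ 𝓛, ρ M * Set.indicator (M.dualAnnihilator : Set (Module.Dual K V)) (fun _ ↦ (1 : R)) ξ

/-- The subspaces `L_I` associated to the subpartitions `I` with blocks of size greater than `m`. -/
def subpartitionSpans {V P ι : Type*} (K : Type*) [Field K] [AddCommGroup V] [Module K V]
    [AddTorsor V P] (s : ι → P) (m : ℕ) : Set (Submodule K V) :=
  {M | ∃ I, IsSubpartition m I ∧ M = blockSpanSum K s I}

section Patching

open Subpartition

variable {K V P ι R : Type*} [Field K] [Infinite K] [AddCommGroup V] [Module K V] [AddTorsor V P]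
  [Finite ι] {m : ℕ} {s : ι → P} {I : Subpartition ι m}

theorem exists_dual_mem_dualAnnihilator_iff_le (hm : 1 ≤ m) (hs : AffineIndependent K s)
    (I : Subpartition ι m) :
    ∃ ξ : Module.Dual K V, ∀ J : Subpartition ι m,
      ξ ∈ (blockSpanSum K s J.blocks).dualAnnihilator ↔ J ≤ I := by
  obtain ⟨f, hf⟩ := exists_labelling K I
  obtain ⟨ξ, hξ⟩ := exists_dual_vsub_eq_sub hs f
  refine ⟨ξ, fun J ↦ ?_⟩
  simp only [mem_dualAnnihilator_blockSpanSum, hξ, sub_eq_zero, hf, le_iff_forall_setoid hm]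

theorem blockSpanSum_blocks_injective (hm : 1 ≤ m) (hs : AffineIndependent K s) :
    Function.Injective fun I : Subpartition ι m ↦ blockSpanSum K s I.blocks := by
  have le_of_eq : ∀ {I J : Subpartition ι m},
      blockSpanSum K s I.blocks = blockSpanSum K s J.blocks → I ≤ J := by
    intro I J h
    obtain ⟨ξ, hξ⟩ := exists_dual_mem_dualAnnihilator_iff_le hm hs J
    rw [← hξ, h, hξ]
  exact fun I J h ↦ (le_of_eq h).antisymm (le_of_eq h.symm)

theorem IsPatchingFunction.sum_Ioc_eq_one [Semiring R] {ρ : Submodule K V → R} (hm : 1 ≤ m)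
    (hs : AffineIndependent K s) (hρ : IsPatchingFunction (subpartitionSpans K s m) ρ)
    (hI : I ≠ ⊥) : ∑ J ∈ Ioc ⊥ I, ρ (blockSpanSum K s J.blocks) = 1 := by
  classical
  obtain ⟨ξ, hξ⟩ := exists_dual_mem_dualAnnihilator_iff_le hm hs I
  have mem_spans : ∀ J : Subpartition ι m, J ≠ ⊥ →
      blockSpanSum K s J.blocks ∈ subpartitionSpans K s m :=
    fun J hJ ↦ ⟨J.blocks, isSubpartition_blocks hJ, rfl⟩
  have hsum := hρ ξ
  rw [Set.indicator_of_mem (Set.mem_biUnion (mem_spans I hI) ((hξ I).2 le_rfl)),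
    finsum_mem_eq_sum_of_subset (t := (Ioc ⊥ I).image fun J ↦ blockSpanSum K s J.blocks),
    sum_image (blockSpanSum_blocks_injective hm hs).injOn] at hsum
  · rw [hsum]
    refine sum_congr rfl fun J hJ ↦ ?_
    rw [Set.indicator_of_mem ((hξ J).2 (mem_Ioc.1 hJ).2), mul_one]
  · rintro _ ⟨⟨J, ⟨hne, hcard, hdisj⟩, rfl⟩, hsupp⟩
    have hJI : ⟨J, hcard, hdisj⟩ ≤ I :=
      (hξ _).1 (Set.mem_of_indicator_ne_zero (right_ne_zero_of_mul hsupp))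
    have hJ : (⟨J, hcard, hdisj⟩ : Subpartition ι m) ≠ ⊥ := blocks_eq_empty_iff.not.1 hne.ne_empty
    exact mem_image.2 ⟨⟨J, hcard, hdisj⟩, mem_Ioc.2 ⟨bot_lt_iff_ne_bot.2 hJ, hJI⟩, rfl⟩
  · rw [coe_image, Set.image_subset_iff]
    exact fun J hJ ↦ mem_spans J (mem_Ioc.1 hJ).1.ne'

theorem IsPatchingFunction.apply_eq_neg_mu [Ring R] {ρ : Submodule K V → R} (hm : 1 ≤ m)
    (hs : AffineIndependent K s) (hρ : IsPatchingFunction (subpartitionSpans K s m) ρ)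
    (hI : I ≠ ⊥) : ρ (blockSpanSum K s I.blocks) = -mu R ⊥ I :=
  eq_neg_mu_bot_of_sum_Ioc (g := fun J : Subpartition ι m ↦ ρ (blockSpanSum K s J.blocks))
    (fun _ hJ ↦ hρ.sum_Ioc_eq_one hm hs hJ) hI

end Patching

theorem stmt_14_general {K V P ι R : Type*} [Field K] [Infinite K] [AddCommGroup V] [Module K V]
    [AddTorsor V P] [Finite ι] [CommRing R] {m : ℕ} (hm : 1 ≤ m) {s : ι → P}
    (hs : AffineIndependent K s) {ρ : Submodule K V → R}
    (hρ : IsPatchingFunction (subpartitionSpans K s m) ρ) :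
    ∀ I, IsSubpartition m I →
      ρ (blockSpanSum K s I) = (-1) ^ (#I - 1) * ∏ B ∈ I, ρ (blockSpanSum K s {B}) ∧
      ∀ I', IsSubpartition m I' → I.val.map card = I'.val.map card →
        ρ (blockSpanSum K s I) = ρ (blockSpanSum K s I') := by
  have rho_eq : ∀ I : Subpartition ι m, I.blocks.Nonempty →
      ρ (blockSpanSum K s I.blocks) = -mu R ⊥ I := fun I hI ↦
    hρ.apply_eq_neg_mu hm hs (Subpartition.blocks_eq_empty_iff.not.1 hI.ne_empty)
  rintro I ⟨hne, hcard, hdisj⟩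
  let J : Subpartition ι m := ⟨I, hcard, hdisj⟩
  refine ⟨?_, ?_⟩
  · have rho_block : ∀ B ∈ I, ρ (blockSpanSum K s {B}) = -mu R ⊥ (Subpartition.ofBlock m B) := by
      intro B hB
      have hblocks := Subpartition.blocks_ofBlock (hcard B hB)
      rw [← rho_eq _ (hblocks ▸ singleton_nonempty B), hblocks]
    rw [rho_eq J hne, Subpartition.mu_bot_eq_prod_ofBlock, prod_congr rfl rho_block, prod_neg,
      ← mul_assoc, ← pow_add]
    have hodd : Odd (#I - 1 + #I) := ⟨#I - 1, by have := hne.card_pos; omega⟩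
    rw [hodd.neg_one_pow, neg_one_mul]
  · rintro I' ⟨hne', hcard', hdisj'⟩ h
    let J' : Subpartition ι m := ⟨I', hcard', hdisj'⟩
    rw [rho_eq J hne, rho_eq J' hne', Subpartition.mu_bot_eq_of_map_card_eq (J := J') h]

theorem stmt_14
    (d k : ℕ) (hd : 1 ≤ d) (hk : k + 1 ≤ d)
    -- affinely independent points s_1, …, s_{d+1}
    (s : Fin (d + 1) → (Fin d → ℝ)) (hs : AffineIndependent ℝ s)
    -- the subspace associated to a block
    (blockSpan : Finset (Fin (d + 1)) → Submodule ℝ (Fin d → ℝ))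
    (hblock : ∀ J, blockSpan J =
      Submodule.span ℝ {x : Fin d → ℝ | ∃ i ∈ J, ∃ j ∈ J, x = s i - s j})
    -- subpartitions with blocks of size ≥ d − k + 1
    (IsSubpartition : Finset (Finset (Fin (d + 1))) → Prop)
    (hsub : ∀ I, IsSubpartition I ↔
      I.Nonempty ∧ (∀ J ∈ I, d - k + 1 ≤ J.card) ∧
        (↑I : Set (Finset (Fin (d + 1)))).Pairwise Disjoint)
    -- the family 𝓛 of subspaces L_I associated to subpartitions
    (𝓛 : Set (Submodule ℝ (Fin d → ℝ)))
    (h𝓛 : ∀ M, M ∈ 𝓛 ↔ ∃ I, IsSubpartition I ∧ M = I.sup blockSpan)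
    -- this family is closed under sums
    (hclosed : ∀ M₁ ∈ 𝓛, ∀ M₂ ∈ 𝓛, M₁ ⊔ M₂ ∈ 𝓛)
    -- ρ is its patching function
    (ρ : Submodule ℝ (Fin d → ℝ) → ℝ)
    (hρ : ∀ ξ : Module.Dual ℝ (Fin d → ℝ),
      Set.indicator
        (⋃ M ∈ 𝓛, ((Submodule.dualAnnihilator M : Submodule ℝ (Module.Dual ℝ (Fin d → ℝ))) :
          Set (Module.Dual ℝ (Fin d → ℝ)))) (fun _ => (1 : ℝ)) ξ =
      ∑ᶠ M ∈ 𝓛,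
        ρ M * Set.indicator
          ((M.dualAnnihilator : Submodule ℝ (Module.Dual ℝ (Fin d → ℝ))) :
            Set (Module.Dual ℝ (Fin d → ℝ))) (fun _ => (1 : ℝ)) ξ)
    :
    ∀ I : Finset (Finset (Fin (d + 1))), IsSubpartition I →
      -- ρ(L_I) is the signed product of the ρ-values of the single blocks
      (ρ (I.sup blockSpan) =
        (-1 : ℝ) ^ (I.card - 1) * ∏ J ∈ I, ρ (Finset.sup {J} blockSpan)) ∧
      -- ρ(L_I) depends only on the multiset of block sizes
      (∀ I' : Finset (Finset (Fin (d + 1))), IsSubpartition I' →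
        Multiset.map Finset.card I.val = Multiset.map Finset.card I'.val →
        ρ (I.sup blockSpan) = ρ (I'.sup blockSpan)) := by
  obtain ⟨rfl, rfl⟩ : blockSpan = (fun B : Finset (Fin (d + 1)) ↦ vectorSpan ℝ (s '' B)) ∧
      IsSubpartition = _root_.IsSubpartition (d - k) :=
    ⟨funext fun B ↦ (hblock B).trans (vectorSpan_image_eq_span_sub s B).symm,
      funext fun I ↦ propext (hsub I)⟩
  obtain rfl : 𝓛 = subpartitionSpans ℝ s (d - k) := Set.ext h𝓛
  exact stmt_14_general (by omega) hs hρ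
end
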